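/- Let N be a lattice in M and let n := dim Supp(N/hN). Then the following are equivalent: (1) N is maximal in its comparability class, i.e., there is no lattice N' with N ⊊ N' such that dim Supp(N'/(N ∩ N')) < n and dim Supp(N/(N ∩ N')) < n; (2) every nonzero R-submodule of N/hN has support of Krull dimension equal to n. -/

import Mathlib

/-- The Krull dimension of the support of a module, with `⊥` (i.e. `-∞`)
for the zero module. -/
noncomputable def dimSupp (R : Type*) [CommRing R] (P : Type*) [AddCommGroup P]
    [Module R P] : WithBot (WithTop ℕ) :=
  Order.krullDim (Module.support R P)

/-- A lattice in a module `M` on which `h` acts bijectively: a finitely generated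
submodule `N` with `M = ⋃_k h⁻ᵏN`. -/
def IsLattice {R : Type*} [CommRing R] {M : Type*} [AddCommGroup M] [Module R M]
    (h : R) (N : Submodule R M) : Prop :=
  N.FG ∧ ∀ m : M, ∃ k : ℕ, h ^ k • m ∈ N

/-- The submodule `hN ⊆ N`, viewed as a submodule of `N`. -/
def hInside {R : Type*} [CommRing R] {M : Type*} [AddCommGroup M] [Module R M]
    (h : R) (N : Submodule R M) : Submodule R N :=
  (N.map (LinearMap.lsmul R M h)).comap N.subtype

/-!
If `x ∉ N` and `h • x ∈ N`, injectivity of `h` gives `a • (h • x) ∈ hN ↔ a • x ∈ N`, so the class of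
`h • x` in `N / hN` and the class of `x` in `M / N` have the same annihilator and generate cyclic
modules with the same support. Hence a small nonzero submodule of `N / hN`, which may be taken
cyclic and generated by the class of `h • x`, yields the larger comparable lattice `N + Rx`.
Conversely, any larger lattice `N'` contains some `x ∉ N` with `h • x ∈ N`, and the cyclic module
generated by the class of `x` embeds in `N' / N`.
-/

open Module

theorem dimSupp_eq_supportDim (R P : Type*) [CommRing R] [AddCommGroup P] [Module R P] :
    dimSupp R P = supportDim R P :=
  rfl

section

variable {R M : Type*} [CommRing R] [AddCommGroup M] [Module R M]

theorem supportDim_mono {P Q : Submodule R M} (hPQ : P ≤ Q) : supportDim R P ≤ supportDim R Q :=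
  supportDim_le_of_injective (Submodule.inclusion hPQ) (Submodule.inclusion_injective hPQ)

theorem supportDim_quotient_inf_eq_map_mkQ (N L : Submodule R M) :
    supportDim R (L ⧸ (N ⊓ L).comap L.subtype) = supportDim R (L.map N.mkQ) := by
  have hker : (N ⊓ L).comap L.subtype = (N.mkQ.domRestrict L).ker := by
    rw [LinearMap.ker_domRestrict, Submodule.ker_mkQ, Submodule.comap_inf,
      Submodule.comap_subtype_self, inf_top_eq]
  rw [hker, ← LinearMap.range_domRestrict]
  exact supportDim_eq_of_equiv (LinearMap.quotKerEquivRange _)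

theorem supportDim_span_singleton (x : M) :
    supportDim R (R ∙ x) = ringKrullDim (R ⧸ Ideal.torsionOf R M x) := by
  rw [supportDim_eq_ringKrullDim_quotient_annihilator,
    ← Ideal.annihilator_span_singleton_eq_torsionOf, Submodule.annihilator]

variable {h : R} {N : Submodule R M}

theorem mkQ_hInside_smul_eq_zero_iff (hinj : Function.Injective (fun m : M => h • m)) {x : M}
    (hx : h • x ∈ N) : (hInside h N).mkQ ⟨h • x, hx⟩ = 0 ↔ x ∈ N := by
  rw [Submodule.mkQ_apply, Submodule.Quotient.mk_eq_zero]
  exact hinj.mem_set_image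

theorem torsionOf_mkQ_hInside_smul (hinj : Function.Injective (fun m : M => h • m)) {x : M}
    (hx : h • x ∈ N) :
    Ideal.torsionOf R (N ⧸ hInside h N) ((hInside h N).mkQ ⟨h • x, hx⟩) =
      Ideal.torsionOf R (M ⧸ N) (N.mkQ x) := by
  ext a
  have hax : h • a • x ∈ N := smul_comm a h x ▸ N.smul_mem a hx
  calc
    a • (hInside h N).mkQ ⟨h • x, hx⟩ = 0 ↔ (hInside h N).mkQ ⟨h • a • x, hax⟩ = 0 := by
      rw [← map_smul, SetLike.mk_smul_mk]
      simp only [smul_comm a h x]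
    _ ↔ a • x ∈ N := mkQ_hInside_smul_eq_zero_iff hinj hax
    _ ↔ a • N.mkQ x = 0 := by rw [← map_smul, Submodule.mkQ_apply, Submodule.Quotient.mk_eq_zero]

theorem supportDim_span_mkQ_hInside_smul (hinj : Function.Injective (fun m : M => h • m)) {x : M}
    (hx : h • x ∈ N) :
    supportDim R (R ∙ (hInside h N).mkQ ⟨h • x, hx⟩) = supportDim R (R ∙ N.mkQ x) := by
  rw [supportDim_span_singleton, supportDim_span_singleton, torsionOf_mkQ_hInside_smul hinj hx]

theorem IsLattice.of_le {L : Submodule R M} (hN : IsLattice h N) (hNL : N ≤ L) (hL : L.FG) :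
    IsLattice h L :=
  ⟨hL, fun m => (hN.2 m).imp fun _ hk => hNL hk⟩

theorem IsLattice.exists_notMem_smul_mem {L : Submodule R M} (hN : IsLattice h N) (hNL : N < L) :
    ∃ x ∈ L, x ∉ N ∧ h • x ∈ N := by
  obtain ⟨m, hmL, hmN⟩ := SetLike.exists_of_lt hNL
  obtain ⟨k, hk, hk_succ⟩ := Nat.exists_not_and_succ_of_not_zero_of_exists
    (p := fun k => h ^ k • m ∈ N) (by rwa [pow_zero, one_smul]) (hN.2 m)
  exact ⟨h ^ k • m, L.smul_mem _ hmL, hk, by rwa [smul_smul, ← pow_succ']⟩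

theorem IsLattice.exists_gt_supportDim_le (hbij : Function.Bijective (fun m : M => h • m))
    (hN : IsLattice h N) {P : Submodule R (N ⧸ hInside h N)} (hP : P ≠ ⊥) :
    ∃ N', IsLattice h N' ∧ N < N' ∧ supportDim R (N'.map N.mkQ) ≤ supportDim R P := by
  obtain ⟨p, hpP, hp⟩ := P.exists_mem_ne_zero_of_ne_bot hP
  obtain ⟨⟨y, hy⟩, rfl⟩ := (hInside h N).mkQ_surjective p
  obtain ⟨x, rfl : h • x = y⟩ := hbij.2 y
  have hxN : x ∉ N := (mkQ_hInside_smul_eq_zero_iff hbij.1 hy).not.1 hp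
  refine ⟨N ⊔ R ∙ x, hN.of_le le_sup_left (hN.1.sup (Submodule.fg_span_singleton x)),
    left_lt_sup.2 ((Submodule.span_singleton_le_iff_mem x N).not.2 hxN), ?_⟩
  calc
    supportDim R ((N ⊔ R ∙ x).map N.mkQ) = supportDim R (R ∙ N.mkQ x) := by
      rw [Submodule.map_sup, Submodule.mkQ_map_self, bot_sup_eq, Submodule.map_span,
        Set.image_singleton]
    _ = supportDim R (R ∙ (hInside h N).mkQ ⟨h • x, hy⟩) :=
      (supportDim_span_mkQ_hInside_smul hbij.1 hy).symm
    _ ≤ supportDim R P := supportDim_mono ((Submodule.span_singleton_le_iff_mem _ P).2 hpP)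

theorem IsLattice.exists_ne_bot_supportDim_le (hinj : Function.Injective (fun m : M => h • m))
    (hN : IsLattice h N) {N' : Submodule R M} (hlt : N < N') :
    ∃ P : Submodule R (N ⧸ hInside h N),
      P ≠ ⊥ ∧ supportDim R P ≤ supportDim R (N'.map N.mkQ) := by
  obtain ⟨x, hxN', hxN, hx⟩ := hN.exists_notMem_smul_mem hlt
  refine ⟨R ∙ (hInside h N).mkQ ⟨h • x, hx⟩, ?_, ?_⟩
  · rwa [Ne, Submodule.span_singleton_eq_bot, mkQ_hInside_smul_eq_zero_iff hinj hx]
  · rw [supportDim_span_mkQ_hInside_smul hinj hx]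
    have hmem : N.mkQ x ∈ N'.map N.mkQ := Submodule.mem_map_of_mem hxN'
    exact supportDim_mono ((Submodule.span_singleton_le_iff_mem _ _).2 hmem)

end

theorem maximal_lattice_iff_no_small_submodule_general
    {R : Type*} [CommRing R]
    {M : Type*} [AddCommGroup M] [Module R M]
    (h : R) (hbij : Function.Bijective (fun m : M => h • m))
    (N : Submodule R M) (hN : IsLattice h N)
    (n : WithBot (WithTop ℕ)) (hn : n = dimSupp R (N ⧸ hInside h N)) :
    (¬ ∃ N' : Submodule R M, IsLattice h N' ∧ N < N' ∧
        dimSupp R (N' ⧸ ((N ⊓ N').comap N'.subtype)) < n ∧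
        dimSupp R (N ⧸ ((N ⊓ N').comap N.subtype)) < n) ↔
    (∀ P : Submodule R (N ⧸ hInside h N), P ≠ ⊥ → dimSupp R P = n) := by
  simp only [dimSupp_eq_supportDim, supportDim_quotient_inf_eq_map_mkQ] at hn ⊢
  constructor
  · intro hmax P hP
    have hPn : supportDim R P ≤ n :=
      hn ▸ supportDim_le_of_injective P.subtype P.subtype_injective
    refine hPn.eq_of_not_lt fun hlt => ?_
    obtain ⟨N', hN', hNN', hle⟩ := hN.exists_gt_supportDim_le hbij hP
    refine hmax ⟨N', hN', hNN', hle.trans_lt hlt, ?_⟩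
    have : Subsingleton (N ⧸ (N ⊓ N').comap N.subtype) := by
      rw [Submodule.Quotient.subsingleton_iff, inf_eq_left.2 hNN'.le, Submodule.comap_subtype_self]
    rw [supportDim_eq_bot_of_subsingleton]
    exact bot_le.trans_lt hlt
  · rintro hfull ⟨N', -, hlt, hdim, -⟩
    obtain ⟨P, hP, hle⟩ := hN.exists_ne_bot_supportDim_le hbij.1 hlt
    exact (hle.trans_lt hdim).ne (hfull P hP)

/-- Theorem 3.3, equivalence (1) ⟺ (2): a lattice `N` in `M` (where
`n := dim Supp N/hN`) is maximal in its comparability class iff every nonzero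
submodule of `N/hN` has support of Krull dimension `n`. -/
theorem maximal_lattice_iff_no_small_submodule
    {R : Type*} [CommRing R] [IsNoetherianRing R]
    {M : Type*} [AddCommGroup M] [Module R M]
    (h : R) (hbij : Function.Bijective (fun m : M => h • m))
    (N : Submodule R M) (hN : IsLattice h N)
    (n : WithBot (WithTop ℕ)) (hn : n = dimSupp R (N ⧸ hInside h N)) :
    (¬ ∃ N' : Submodule R M, IsLattice h N' ∧ N < N' ∧
        dimSupp R (N' ⧸ ((N ⊓ N').comap N'.subtype)) < n ∧
        dimSupp R (N ⧸ ((N ⊓ N').comap N.subtype)) < n) ↔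
    (∀ P : Submodule R (N ⧸ hInside h N), P ≠ ⊥ → dimSupp R P = n) :=
  maximal_lattice_iff_no_small_submodule_general h hbij N hN n hn
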